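/- arXiv:2111.01784 — 16 statements merged into one kernel-verified Lean document; each statement's English description precedes it below -/
import Mathlib

section
/- If a Pinwheel Scheduling instance a with k tasks is schedulable, then its density satisfies d(a) = ∑ i, (1 / (a i) : ℚ) ≤ 1. -/
/-- A schedule `S` is valid for the Pinwheel Scheduling instance `a` if every task `i`
is executed at least once in every window of `a i` consecutive days. -/
def IsValidSchedule {k : ℕ} (a : Fin k → ℕ) (S : ℕ → Option (Fin k)) : Prop :=
  ∀ i : Fin k, ∀ t : ℕ, ∃ t', t ≤ t' ∧ t' < t + a i ∧ S t' = some i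

/-- A Pinwheel Scheduling instance is schedulable if some valid schedule exists. -/
def Schedulable {k : ℕ} (a : Fin k → ℕ) : Prop :=
  ∃ S : ℕ → Option (Fin k), IsValidSchedule a S

/-- In the first `m * a i` days, task `i` is executed at least `m` times. -/
theorem le_card_executions {k : ℕ} (a : Fin k → ℕ) (S : ℕ → Option (Fin k))
    (hS : IsValidSchedule a S) (i : Fin k) (m : ℕ) :
    m ≤ ((Finset.range (m * a i)).filter (fun t => S t = some i)).card := by
  induction m with
  | zero => simp
  | succ m ih =>
    obtain ⟨t, h1, h2, h3⟩ := hS i (m * a i)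
    refine Nat.succ_le_of_lt (lt_of_le_of_lt ih (Finset.card_lt_card ?_))
    rw [Finset.ssubset_iff_of_subset]
    · refine ⟨t, ?_, ?_⟩
      · simp only [Finset.mem_filter, Finset.mem_range]
        exact ⟨by rw [Nat.succ_mul]; exact h2, h3⟩
      · simp only [Finset.mem_filter, Finset.mem_range]
        intro h
        omega
    · intro x hx
      simp only [Finset.mem_filter, Finset.mem_range] at hx ⊢
      exact ⟨by rw [Nat.succ_mul]; omega, hx.2⟩

theorem density_le_one_of_schedulable {k : ℕ} (a : Fin k → ℕ)
    (h : Schedulable a) : ∑ i, (1 / (a i) : ℚ) ≤ 1 := by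
  obtain ⟨S, hS⟩ := h
  have hpos : ∀ i, 0 < a i := by
    intro i
    obtain ⟨t, h1, h2, -⟩ := hS i 0
    omega
  set N := ∏ i, a i with hN
  have hNpos : 0 < N := Finset.prod_pos fun i _ => hpos i
  have hdvd : ∀ i, a i ∣ N := fun i => Finset.dvd_prod_of_mem a (Finset.mem_univ i)
  have hsum : ∑ i, N / a i ≤ N := by
    calc ∑ i, N / a i
        ≤ ∑ i, ((Finset.range N).filter (fun t => S t = some i)).card := by
          refine Finset.sum_le_sum fun i _ => ?_
          have := le_card_executions a S hS i (N / a i)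
          rwa [Nat.div_mul_cancel (hdvd i)] at this
      _ = (Finset.univ.biUnion
            fun i => (Finset.range N).filter (fun t => S t = some i)).card := by
          rw [Finset.card_biUnion]
          intro i _ j _ hij
          rw [Function.onFun, Finset.disjoint_left]
          intro t hi hj
          simp only [Finset.mem_filter] at hi hj
          exact hij (Option.some.inj (hi.2.symm.trans hj.2))
      _ ≤ (Finset.range N).card := by
          refine Finset.card_le_card ?_
          intro t ht
          simp only [Finset.mem_biUnion, Finset.mem_filter] at ht
          obtain ⟨_, _, ht, _⟩ := ht
          exact ht
      _ = N := Finset.card_range N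
  have hNq : (0 : ℚ) < N := by exact_mod_cast hNpos
  have hq : (N : ℚ) * ∑ i, (1 / (a i) : ℚ) ≤ N * 1 := by
    rw [Finset.mul_sum, mul_one]
    calc ∑ i, (N : ℚ) * (1 / (a i) : ℚ) = ((∑ i, N / a i : ℕ) : ℚ) := by
          rw [Nat.cast_sum]
          refine Finset.sum_congr rfl fun i _ => ?_
          rw [Nat.cast_div (hdvd i) (by exact_mod_cast (hpos i).ne'), mul_one_div]
      _ ≤ N := by exact_mod_cast hsum
  exact le_of_mul_le_mul_left hq hNq
end

section
/- Every Pinwheel Scheduling instance a with k tasks such that a i ≥ 1 for all i and density d(a) = ∑ i, (1 / (a i) : ℚ) ≤ 1/2 is schedulable. -/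
lemma residues_exist {ι : Type*} [DecidableEq ι] (e : ι → ℕ) (s : Finset ι) :
    (∑ i ∈ s, (1 / 2 ^ e i : ℚ)) ≤ 1 →
    ∃ r : ι → ℕ, ∀ i ∈ s, ∀ j ∈ s, ∀ t : ℕ,
      t ≡ r i [MOD 2 ^ e i] → t ≡ r j [MOD 2 ^ e j] → i = j := by
  induction s using Finset.induction_on_max_value e with
  | empty => intro _; exact ⟨fun _ => 0, by simp⟩
  | insert a s has hmax ih =>
    intro hsum
    rw [Finset.sum_insert has] at hsum
    have hpos : (0 : ℚ) < 1 / 2 ^ e a := by positivity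
    obtain ⟨r, hr⟩ := ih (by linarith)
    have hcard : ∑ j ∈ s, 2 ^ (e a - e j) < 2 ^ e a := by
      have h1 : ((∑ j ∈ s, 2 ^ (e a - e j) : ℕ) : ℚ) = 2 ^ e a * ∑ j ∈ s, (1 / 2 ^ e j : ℚ) := by
        push_cast
        rw [Finset.mul_sum]
        refine Finset.sum_congr rfl fun j hj => ?_
        rw [pow_sub₀ _ (by norm_num) (hmax j hj)]
        simp
      have h2 : (2 : ℚ) ^ e a * ∑ j ∈ s, (1 / 2 ^ e j : ℚ) < 2 ^ e a * 1 :=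
        mul_lt_mul_of_pos_left (by linarith) (by positivity)
      rw [← h1, mul_one] at h2
      exact_mod_cast h2
    obtain ⟨x, hx⟩ : ∃ x : ℕ, ∀ j ∈ s, ¬ x ≡ r j [MOD 2 ^ e j] := by
      by_contra! hcon
      have hsub : Finset.range (2 ^ e a) ⊆ s.biUnion
          (fun j => (Finset.range (2 ^ e a)).filter (fun x => x ≡ r j [MOD 2 ^ e j])) := by
        intro x hx
        obtain ⟨j, hj, h⟩ := hcon x
        simp only [Finset.mem_biUnion, Finset.mem_filter]
        exact ⟨j, hj, hx, h⟩
      have h1 := (Finset.card_le_card hsub).trans Finset.card_biUnion_le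
      rw [Finset.card_range] at h1
      refine absurd (h1.trans (Finset.sum_le_sum fun j hj => ?_)) (not_le.mpr hcard)
      rw [← Finset.card_range (2 ^ (e a - e j))]
      refine Finset.card_le_card_of_injOn (fun x => x / 2 ^ e j) ?_ ?_
      · intro x hx
        simp only [Finset.coe_filter, Finset.mem_range, Set.mem_ofPred_eq] at hx
        simp only [Finset.coe_range, Set.mem_Iio]
        rw [Nat.div_lt_iff_lt_mul (by positivity), ← pow_add, Nat.sub_add_cancel (hmax j hj)]
        exact hx.1
      · intro x hx y hy hxy
        simp only [Finset.coe_filter, Set.mem_ofPred_eq] at hx hy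
        have hm : x % 2 ^ e j = y % 2 ^ e j := hx.2.trans hy.2.symm
        have hxy' : x / 2 ^ e j = y / 2 ^ e j := hxy
        rw [← Nat.div_add_mod x (2 ^ e j), ← Nat.div_add_mod y (2 ^ e j), hm, hxy']
    have key : ∀ j ∈ s, ∀ t : ℕ, t ≡ x [MOD 2 ^ e a] → t ≡ r j [MOD 2 ^ e j] → False :=
      fun j hj t h1 h2 =>
        hx j hj ((h1.of_dvd (pow_dvd_pow 2 (hmax j hj))).symm.trans h2)
    have hne : ∀ j ∈ s, j ≠ a := fun j hj h => has (h ▸ hj)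
    refine ⟨Function.update r a x, ?_⟩
    intro i hi j hj t h1 h2
    rcases Finset.mem_insert.mp hi with rfl | hi2
    · rcases Finset.mem_insert.mp hj with rfl | hj
      · rfl
      · rw [Function.update_self] at h1
        rw [Function.update_of_ne (hne j hj)] at h2
        exact (key j hj t h1 h2).elim
    · rcases Finset.mem_insert.mp hj with rfl | hj
      · rw [Function.update_self] at h2
        rw [Function.update_of_ne (hne i hi2)] at h1
        exact (key i hi2 t h2 h1).elim
      · rw [Function.update_of_ne (hne i hi2)] at h1
        rw [Function.update_of_ne (hne j hj)] at h2
        exact hr i hi2 j hj t h1 h2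

theorem schedulable_of_density_le_half {k : ℕ} (a : Fin k → ℕ)
    (ha : ∀ i, 1 ≤ a i) (hd : ∑ i, (1 / (a i) : ℚ) ≤ 1 / 2) :
    Schedulable a := by
  classical
  have hle : ∀ i, 2 ^ Nat.log 2 (a i) ≤ a i := fun i =>
    Nat.pow_log_le_self 2 (by have := ha i; omega)
  have hsum : ∑ i, (1 / 2 ^ Nat.log 2 (a i) : ℚ) ≤ 1 := by
    have h1 : ∑ i, (1 / 2 ^ Nat.log 2 (a i) : ℚ) ≤ ∑ i, 2 * (1 / (a i) : ℚ) := by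
      refine Finset.sum_le_sum fun i _ => ?_
      have hlt : (a i : ℚ) ≤ 2 ^ Nat.log 2 (a i) * 2 := by
        rw [← pow_succ]
        exact_mod_cast (Nat.lt_pow_succ_log_self (by norm_num) (a i)).le
      have hp : (0 : ℚ) < a i := by exact_mod_cast ha i
      rw [mul_one_div, div_le_div_iff₀ (by positivity) hp]
      linarith
    rw [← Finset.mul_sum] at h1
    linarith
  obtain ⟨r, hr⟩ := residues_exist (fun i => Nat.log 2 (a i)) Finset.univ hsum
  refine ⟨fun t => if h : ∃ i, t ≡ r i [MOD 2 ^ Nat.log 2 (a i)] then some h.choose else none, ?_⟩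
  intro i t
  obtain ⟨t', h1, h2, h3⟩ : ∃ t', t ≤ t' ∧ t' < t + 2 ^ Nat.log 2 (a i) ∧
      t' ≡ r i [MOD 2 ^ Nat.log 2 (a i)] := by
    have hm : 0 < 2 ^ Nat.log 2 (a i) := by positivity
    generalize 2 ^ Nat.log 2 (a i) = m at hm
    refine ⟨t + (r i + (m - t % m)) % m, by omega,
      by have := Nat.mod_lt (r i + (m - t % m)) hm; omega, ?_⟩
    have h4 := Nat.mod_lt t hm
    have h5 : t + (r i + (m - t % m)) = r i + m * (t / m + 1) := by
      have := Nat.div_add_mod t m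
      rw [mul_add, mul_one]
      omega
    unfold Nat.ModEq
    rw [Nat.add_mod_mod, h5, Nat.add_mul_mod_self_left]
  refine ⟨t', h1, by have := hle i; omega, ?_⟩
  have hex : ∃ i, t' ≡ r i [MOD 2 ^ Nat.log 2 (a i)] := ⟨i, h3⟩
  simp only [dif_pos hex]
  exact congrArg some (hr _ (Finset.mem_univ _) _ (Finset.mem_univ _) t' hex.choose_spec h3)
end

section
/- For every natural number M ≥ 1, the Pinwheel Scheduling instance with 3 tasks of frequencies 2, 3 and M is not schedulable. -/
theorem not_schedulable_two_three_M (M : ℕ) (hM : 1 ≤ M) :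
    ¬ Schedulable ![2, 3, M] := by
  rintro ⟨S, hS⟩
  -- a day `s ≥ 1` on which the third task is executed
  obtain ⟨s, hs1, -, hs⟩ := hS 2 1
  obtain ⟨r, rfl⟩ : ∃ r, s = r + 1 := ⟨s - 1, by omega⟩
  obtain ⟨p, hp1, hp2, hp⟩ := hS 0 r
  obtain ⟨q, hq1, hq2, hq⟩ := hS 0 (r + 1)
  obtain ⟨u, hu1, hu2, hu⟩ := hS 1 r
  simp at hp2 hq2 hu2
  have hp0 : S r = some 0 := by
    obtain rfl | rfl : p = r ∨ p = r + 1 := by omega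
    · exact hp
    · rw [hs] at hp; simp at hp
  have hq0 : S (r + 2) = some 0 := by
    obtain rfl | rfl : q = r + 1 ∨ q = r + 2 := by omega
    · rw [hs] at hq; simp at hq
    · exact hq
  obtain rfl | rfl | rfl : u = r ∨ u = r + 1 ∨ u = r + 2 := by omega
  · rw [hp0] at hu; simp at hu
  · rw [hs] at hu; simp at hu
  · rw [hq0] at hu; simp at hu
end

section
/- If a Pinwheel Scheduling instance a with k tasks is schedulable, then there exist a period p with 1 ≤ p ≤ ∏ i, a i and a valid schedule S for a that is periodic with period p, i.e. S (t + p) = S t for all t ∈ ℕ. -/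
theorem exists_periodic_schedule_of_schedulable {k : ℕ} (a : Fin k → ℕ)
    (h : Schedulable a) :
    ∃ (p : ℕ) (S : ℕ → Option (Fin k)), 1 ≤ p ∧ p ≤ ∏ i, a i ∧
      IsValidSchedule a S ∧ ∀ t, S (t + p) = S t := by
  obtain ⟨S, hS⟩ := h
  have H : ∀ i : Fin k, ∀ t : ℕ, ∃ d, d < a i ∧ S (t + d) = some i ∧
      ∀ e, e < d → S (t + e) ≠ some i := by
    intro i t
    have hex : ∃ d, S (t + d) = some i := by
      obtain ⟨t', h1, _, h3⟩ := hS i t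
      exact ⟨t' - t, by rwa [Nat.add_sub_cancel' h1]⟩
    refine ⟨Nat.find hex, ?_, Nat.find_spec hex, fun e he => Nat.find_min hex he⟩
    obtain ⟨t', h1, h2, h3⟩ := hS i t
    have : Nat.find hex ≤ t' - t := Nat.find_min' hex (by rwa [Nat.add_sub_cancel' h1])
    omega
  choose n hn1 hn2 hn3 using H
  -- pigeonhole on the vector of waiting times
  let f : Fin ((∏ i, a i) + 1) → ((i : Fin k) → Fin (a i)) := fun t i => ⟨n i t, hn1 i t⟩
  have hcard : Fintype.card ((i : Fin k) → Fin (a i)) <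
      Fintype.card (Fin ((∏ i, a i) + 1)) := by
    simp
  obtain ⟨x, y, hxy, hf⟩ := Fintype.exists_ne_map_eq_of_card_lt f hcard
  have key : ∃ t1 p : ℕ, 1 ≤ p ∧ p ≤ ∏ i, a i ∧ ∀ i, n i t1 = n i (t1 + p) := by
    have hn : ∀ i, n i x = n i y := fun i => congrArg Fin.val (congrFun hf i)
    have hx := x.2
    have hy := y.2
    have hne : (x : ℕ) ≠ y := fun h => hxy (Fin.ext h)
    rcases Nat.lt_or_gt_of_ne hne with hl | hl
    · refine ⟨x, y - x, by omega, by omega, fun i => ?_⟩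
      rw [Nat.add_sub_cancel' hl.le]
      exact hn i
    · refine ⟨y, x - y, by omega, by omega, fun i => ?_⟩
      rw [Nat.add_sub_cancel' hl.le]
      exact (hn i).symm
  obtain ⟨t1, p, hp1, hp2, hn⟩ := key
  refine ⟨p, fun t => S (t1 + t % p), hp1, hp2, ?_, fun t => by simp⟩
  intro i t
  have hT : t % p < p := Nat.mod_lt _ hp1
  have hd := hn1 i (t1 + t % p)
  have hdS := hn2 i (t1 + t % p)
  have hdm := hn3 i (t1 + t % p)
  refine ⟨t + n i (t1 + t % p), by omega, by omega, ?_⟩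
  generalize n i (t1 + t % p) = d at *
  have hmod : (t + d) % p = (t % p + d) % p := by simp
  simp only [hmod]
  generalize t % p = T at *
  by_cases hlt : T + d < p
  · rw [Nat.mod_eq_of_lt hlt, ← Nat.add_assoc]
    exact hdS
  · have e1 := hn2 i t1
    have e2 := hn2 i (t1 + p)
    have e3 := hn3 i (t1 + p)
    rw [← hn i] at e2 e3
    generalize n i t1 = m at *
    have hm : m < p := by
      by_contra hge
      refine e3 (m - p) (by omega) ?_
      rw [show t1 + p + (m - p) = t1 + m by omega]
      exact e1
    have hm1 : m ≤ T + d - p := by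
      by_contra hge
      refine e3 (T + d - p) (by omega) ?_
      rw [show t1 + p + (T + d - p) = t1 + T + d by omega]
      exact hdS
    have hm2 : T + d - p ≤ m := by
      by_contra hge
      refine hdm (p + m - T) (by omega) ?_
      rw [show t1 + T + (p + m - T) = t1 + p + m by omega]
      exact e2
    have : T + d = m + p := by omega
    rw [this, Nat.add_mod_right, Nat.mod_eq_of_lt hm]
    exact e1
end

section
/- For every x : Fin k → ℕ and every list r of tasks (entries in Fin k), the state obtained by executing r twice from x dominates componentwise the state obtained by executing r once from x: for every i, exec (exec x r) r i ≥ exec x r i. Moreover, if r is nonempty, then equality holds in component i if and only if i occurs in r. -/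
/-- Executing task `j` in state `x`: task `j` is reset to `0`, all other counters grow. -/
def step {k : ℕ} (x : Fin k → ℕ) (j : Fin k) : Fin k → ℕ :=
  fun i => if i = j then 0 else x i + 1

/-- Executing a list of tasks in order. -/
def exec {k : ℕ} (x : Fin k → ℕ) (r : List (Fin k)) : Fin k → ℕ :=
  List.foldl step x r

theorem exec_of_not_mem {k : ℕ} (r : List (Fin k)) (i : Fin k) (hi : i ∉ r) :
    ∀ x : Fin k → ℕ, exec x r i = x i + r.length := by
  induction r with
  | nil => intro x; simp [exec]
  | cons a t ih =>
    intro x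
    simp only [List.mem_cons, not_or] at hi
    have h := ih hi.2 (step x a)
    have h2 : exec x (a :: t) = exec (step x a) t := rfl
    rw [h2, h]
    simp only [step, if_neg hi.1, List.length_cons]
    omega

theorem exec_congr {k : ℕ} (r : List (Fin k)) (i : Fin k) :
    ∀ x y : Fin k → ℕ, x i = y i → exec x r i = exec y r i := by
  induction r with
  | nil => intro x y h; exact h
  | cons a t ih =>
    intro x y h
    exact ih (step x a) (step y a) (by simp only [step, h])

theorem exec_of_mem {k : ℕ} (r : List (Fin k)) (i : Fin k) (hi : i ∈ r) :
    ∀ x y : Fin k → ℕ, exec x r i = exec y r i := by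
  induction r with
  | nil => simp at hi
  | cons a t ih =>
    intro x y
    by_cases h : i = a
    · exact exec_congr t i (step x a) (step y a) (by simp only [step, if_pos h])
    · exact ih ((List.mem_cons.1 hi).resolve_left h) (step x a) (step y a)

theorem exec_repeat_worse {k : ℕ} (x : Fin k → ℕ) (r : List (Fin k)) :
    (∀ i, exec x r i ≤ exec (exec x r) r i) ∧
    (r ≠ [] → ∀ i, (exec (exec x r) r i = exec x r i ↔ i ∈ r)) := by
  refine ⟨fun i => ?_, fun hr i => ⟨fun h => ?_, fun h => exec_of_mem r i h _ _⟩⟩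
  · by_cases h : i ∈ r
    · exact (exec_of_mem r i h _ _).le
    · rw [exec_of_not_mem r i h (exec x r)]
      omega
  · by_contra hn
    rw [exec_of_not_mem r i hn (exec x r)] at h
    have := List.length_pos_of_ne_nil hr
    omega
end

section
/- Let a be a Pinwheel Scheduling instance with k tasks and x a state for a such that some schedule is valid from state x for a. Then for every m : ℕ, the number of tasks i with a i - x i ≤ m is at most m. (Equivalently, listing the urgencies u i = a i - x i - 1 in nondecreasing order, the j-th smallest urgency, 0-indexed, is at least j.) -/
/-- A schedule `S` is valid from state `x` for the instance `a` if every task `i` is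
executed within its remaining deadline `a i - x i`, and `S` is a valid schedule. -/
def IsValidFrom {k : ℕ} (a : Fin k → ℕ) (x : Fin k → ℕ) (S : ℕ → Option (Fin k)) : Prop :=
  (∀ i : Fin k, ∃ t, t < a i - x i ∧ S t = some i) ∧ IsValidSchedule a S

theorem urgency_bound {k : ℕ} (a x : Fin k → ℕ) (hx : ∀ i, x i < a i)
    (h : ∃ S : ℕ → Option (Fin k), IsValidFrom a x S) :
    ∀ m : ℕ, (Finset.univ.filter fun i : Fin k => a i - x i ≤ m).card ≤ m := by
  obtain ⟨S, hS, -⟩ := h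
  intro m
  choose f hf hSf using hS
  have hcard := Finset.card_le_card_of_injOn (s := Finset.univ.filter fun i : Fin k => a i - x i ≤ m)
    (t := Finset.range m) f
    (by
      intro i hi
      have h1 : a i - x i ≤ m := by simpa using hi
      have h2 := hf i
      have h3 : f i < m := by omega
      simpa using h3)
    (by
      intro i _ j _ hij
      have h1 := hSf i
      rw [hij, hSf j] at h1
      exact (Option.some.inj h1).symm)
  simpa using hcard
end

section
/- Let a be a Pinwheel Scheduling instance with k tasks, x a state for a, S a schedule valid from state x for a, and m : ℕ such that the set T = {i | a i - x i ≤ m} has exactly m elements. Then every task of T is executed within the first m days: for every i ∈ T there exists t < m with S t = some i; consequently, for every day t < m there is some i ∈ T with S t = some i. -/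
theorem forcing {k : ℕ} (a x : Fin k → ℕ) (hx : ∀ i, x i < a i)
    (S : ℕ → Option (Fin k)) (hS : IsValidFrom a x S) (m : ℕ)
    (T : Finset (Fin k)) (hT : T = Finset.univ.filter fun i : Fin k => a i - x i ≤ m)
    (hcard : T.card = m) :
    (∀ i ∈ T, ∃ t < m, S t = some i) ∧
    (∀ t < m, ∃ i ∈ T, S t = some i) := by
  have h1 : ∀ i ∈ T, ∃ t < m, S t = some i := by
    intro i hi
    obtain ⟨t, ht, hst⟩ := hS.1 i
    rw [hT, Finset.mem_filter] at hi
    exact ⟨t, lt_of_lt_of_le ht hi.2, hst⟩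
  refine ⟨h1, ?_⟩
  choose f hf hfS using h1
  intro t ht
  obtain ⟨i, hi, h⟩ := Finset.surj_on_of_inj_on_of_card_le (s := T) (t := Finset.range m) f
    (fun i hi => Finset.mem_range.mpr (hf i hi))
    (fun i j hi hj hij => by
      have h2 := hfS i hi
      rw [hij, hfS j hj] at h2
      exact (Option.some.inj h2).symm)
    (by simp [hcard]) t (Finset.mem_range.mpr ht)
  exact ⟨i, hi, by rw [h]; exact hfS i hi⟩
end

section
/- For every k : ℕ there exists a finite set F of Pinwheel Scheduling instances with k tasks such that every member of F is schedulable and, for every instance b with k tasks, b is schedulable if and only if there exists a ∈ F with a i ≤ b i for all i. -/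
theorem finite_pareto_surface (k : ℕ) :
    ∃ F : Finset (Fin k → ℕ),
      (∀ a ∈ F, Schedulable a) ∧
      (∀ b : Fin k → ℕ, Schedulable b ↔ ∃ a ∈ F, ∀ i, a i ≤ b i) := by
  have hfin : {a : Fin k → ℕ | Minimal Schedulable a}.Finite :=
    WellQuasiOrderedLE.finite_of_isAntichain (setOf_minimal_antichain _)
  refine ⟨hfin.toFinset, fun a ha => ?_, fun b => ⟨fun hb => ?_, ?_⟩⟩
  · exact (hfin.mem_toFinset.1 ha).prop
  · obtain ⟨a, hab, ha⟩ := exists_minimal_le_of_wellFoundedLT Schedulable b hb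
    exact ⟨a, hfin.mem_toFinset.2 ha, hab⟩
  · rintro ⟨a, ha, hab⟩
    obtain ⟨S, hS⟩ := (hfin.mem_toFinset.1 ha).prop
    refine ⟨S, fun i t => ?_⟩
    obtain ⟨t', h1, h2, h3⟩ := hS i t
    exact ⟨t', h1, h2.trans_le (Nat.add_le_add_left (hab i) t), h3⟩
end

section
/- Let F be an inclusion-minimal set of schedulable Pinwheel Scheduling instances with k tasks that solves the schedulable k-task instances. Then an instance a belongs to F if and only if a is schedulable and, for every task i, the instance obtained from a by replacing a i with a i - 1 is not schedulable. Consequently, the inclusion-minimal solving set is unique. -/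
/-- `F` solves the schedulable `k`-task instances: all members of `F` are schedulable
and every schedulable instance is dominated by some member of `F`. -/
def Solves {k : ℕ} (F : Set (Fin k → ℕ)) : Prop :=
  (∀ a ∈ F, Schedulable a) ∧
  (∀ b : Fin k → ℕ, Schedulable b → ∃ a ∈ F, ∀ i, a i ≤ b i)

/-- `F` is an inclusion-minimal solving set: it solves, and no proper subset does. -/
def MinimalSolves {k : ℕ} (F : Set (Fin k → ℕ)) : Prop :=
  Solves F ∧ ∀ G ⊂ F, ¬ Solves G

theorem Schedulable.mono_aux {k : ℕ} {a b : Fin k → ℕ} (ha : Schedulable a)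
    (h : ∀ i, a i ≤ b i) : Schedulable b := by
  obtain ⟨S, hS⟩ := ha
  refine ⟨S, fun i t => ?_⟩
  obtain ⟨t', h1, h2, h3⟩ := hS i t
  exact ⟨t', h1, by have := h i; omega, h3⟩

theorem Schedulable.pos_aux {k : ℕ} {a : Fin k → ℕ} (ha : Schedulable a) (i : Fin k) :
    0 < a i := by
  obtain ⟨S, hS⟩ := ha
  obtain ⟨t', h1, h2, h3⟩ := hS i 0
  omega

theorem MinimalSolves.mem_iff_aux {k : ℕ} {F : Set (Fin k → ℕ)} (hF : MinimalSolves F)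
    (a : Fin k → ℕ) :
    a ∈ F ↔ Schedulable a ∧
      ∀ i : Fin k, ¬ Schedulable (Function.update a i (a i - 1)) := by
  obtain ⟨⟨hs, hd⟩, hmin⟩ := hF
  constructor
  · intro ha
    refine ⟨hs a ha, fun i hi => ?_⟩
    obtain ⟨c, hc, hle⟩ := hd _ hi
    have hpos := (hs a ha).pos_aux i
    have hca : c ≠ a := by
      rintro rfl
      have := hle i
      rw [Function.update_self] at this
      omega
    have hcle : ∀ j, c j ≤ a j := by
      intro j
      have := hle j
      by_cases hj : j = i
      · subst hj
        rw [Function.update_self] at this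
        omega
      · rwa [Function.update_of_ne hj] at this
    refine hmin (F \ {a}) ⟨Set.diff_subset, fun h => (h ha).2 rfl⟩ ⟨fun b hb => hs b hb.1, ?_⟩
    intro b hb
    obtain ⟨d, hdF, hdb⟩ := hd b hb
    by_cases hda : d = a
    · subst hda
      exact ⟨c, ⟨hc, hca⟩, fun j => (hcle j).trans (hdb j)⟩
    · exact ⟨d, ⟨hdF, hda⟩, hdb⟩
  · rintro ⟨ha, hn⟩
    obtain ⟨c, hc, hle⟩ := hd a ha
    by_cases hca : c = a
    · exact hca ▸ hc
    · obtain ⟨i, hi⟩ := Function.ne_iff.mp hca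
      refine absurd ((hs c hc).mono_aux fun j => ?_) (hn i)
      by_cases hj : j = i
      · subst hj
        rw [Function.update_self]
        have := hle j
        omega
      · rw [Function.update_of_ne hj]
        exact hle j

theorem pareto_surface_characterization_and_unique {k : ℕ}
    (F : Set (Fin k → ℕ)) (hF : MinimalSolves F) :
    (∀ a : Fin k → ℕ,
      a ∈ F ↔ Schedulable a ∧
        ∀ i : Fin k, ¬ Schedulable (Function.update a i (a i - 1))) ∧
    (∀ F' : Set (Fin k → ℕ), MinimalSolves F' → F' = F) := by
  exact ⟨hF.mem_iff_aux, fun F' hF' => Set.ext fun a =>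
    (hF'.mem_iff_aux a).trans (hF.mem_iff_aux a).symm⟩
end

section
/- For every k : ℕ there exists m : ℕ such that for every Pinwheel Scheduling instance a with k tasks, a is schedulable if and only if the instance i ↦ min (a i) m, obtained by capping all frequencies at m, is schedulable. -/
theorem Schedulable.mono {k : ℕ} {a b : Fin k → ℕ} (h : a ≤ b) (ha : Schedulable a) :
    Schedulable b := by
  obtain ⟨S, hS⟩ := ha
  refine ⟨S, fun i t => ?_⟩
  obtain ⟨t', h1, h2, h3⟩ := hS i t
  have hi : a i ≤ b i := h i
  exact ⟨t', h1, by omega, h3⟩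

theorem frequency_capping (k : ℕ) :
    ∃ m : ℕ, ∀ a : Fin k → ℕ,
      Schedulable a ↔ Schedulable (fun i => min (a i) m) := by
  have hfin : {b : Fin k → ℕ | Minimal Schedulable b}.Finite :=
    WellQuasiOrderedLE.finite_of_isAntichain (setOfPred_minimal_antichain _)
  obtain ⟨M, hM⟩ := hfin.bddAbove
  refine ⟨∑ i, M i, fun a => ⟨fun ha => ?_, fun h => h.mono fun i => min_le_left _ _⟩⟩
  obtain ⟨b, hba, hb⟩ := exists_minimal_le_of_wellFoundedLT Schedulable a ha
  refine hb.prop.mono fun i => le_min (hba i) ((hM hb i).trans ?_)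
  exact Finset.single_le_sum (fun _ _ => Nat.zero_le _) (Finset.mem_univ i)
end

section
/- The following two statements are equivalent. (A) (the 2^k Conjecture) For every k and every loosely schedulable Pinwheel Scheduling instance a with k tasks, a admits a valid schedule with gap frequency 2^k. (B) (the Kernel Conjecture) For every k ≥ 1 and every schedulable Pinwheel Scheduling instance a with k tasks, there exists a schedulable k-task instance a' with a' i ≤ a i and a' i ≤ 2^(k-1) for all i. -/
/-- The schedule `S` contains a holiday in every window of `g` consecutive days. -/
def HasGapFrequency {k : ℕ} (S : ℕ → Option (Fin k)) (g : ℕ) : Prop :=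
  ∀ t : ℕ, ∃ t', t ≤ t' ∧ t' < t + g ∧ S t' = none

/-- `a` is loosely schedulable: it admits a valid schedule with some gap frequency `g ≥ 1`. -/
def LooselySchedulable {k : ℕ} (a : Fin k → ℕ) : Prop :=
  ∃ (S : ℕ → Option (Fin k)) (g : ℕ), 1 ≤ g ∧ IsValidSchedule a S ∧ HasGapFrequency S g

/-- Deleting task `i` turns it into a holiday. -/
theorem split_task {n : ℕ} (a : Fin (n + 1) → ℕ) (i : Fin (n + 1)) (h : Schedulable a) :
    ∃ S : ℕ → Option (Fin n), IsValidSchedule (fun j => a (i.succAbove j)) S ∧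
      HasGapFrequency S (a i) := by
  obtain ⟨S, hS⟩ := h
  refine ⟨fun t => (S t).bind (finSuccEquiv' i), ?_, ?_⟩
  · intro j t
    obtain ⟨t', h1, h2, h3⟩ := hS (i.succAbove j) t
    exact ⟨t', h1, h2, by simp [h3]⟩
  · intro t
    obtain ⟨t', h1, h2, h3⟩ := hS i t
    exact ⟨t', h1, h2, by simp [h3]⟩

/-- Filling the holidays with a new task `i`. -/
theorem merge_task {n : ℕ} (a : Fin (n + 1) → ℕ) (i : Fin (n + 1)) (S : ℕ → Option (Fin n))
    (h : IsValidSchedule (fun j => a (i.succAbove j)) S) (hg : HasGapFrequency S (a i)) :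
    Schedulable a := by
  refine ⟨fun t => some ((finSuccEquiv' i).symm (S t)), ?_⟩
  intro j t
  rcases Fin.eq_self_or_eq_succAbove i j with rfl | ⟨j, rfl⟩
  · obtain ⟨t', h1, h2, h3⟩ := hg t
    exact ⟨t', h1, h2, by simp [h3]⟩
  · obtain ⟨t', h1, h2, h3⟩ := h j t
    exact ⟨t', h1, h2, by simp [h3]⟩

theorem HasGapFrequency.mono_gap {k : ℕ} {S : ℕ → Option (Fin k)} {g g' : ℕ}
    (h : HasGapFrequency S g) (hg : g ≤ g') : HasGapFrequency S g' := by
  intro t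
  obtain ⟨t', h1, h2, h3⟩ := h t
  exact ⟨t', h1, by omega, h3⟩

theorem two_pow_conjecture_iff_kernel_conjecture :
    (∀ (k : ℕ) (a : Fin k → ℕ), LooselySchedulable a →
      ∃ S : ℕ → Option (Fin k), IsValidSchedule a S ∧ HasGapFrequency S (2 ^ k)) ↔
    (∀ (k : ℕ), 1 ≤ k → ∀ a : Fin k → ℕ, Schedulable a →
      ∃ a' : Fin k → ℕ, Schedulable a' ∧ ∀ i, a' i ≤ a i ∧ a' i ≤ 2 ^ (k - 1)) := by
  constructor
  · intro hA k hk a ha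
    obtain ⟨n, rfl⟩ : ∃ n, k = n + 1 := ⟨k - 1, by omega⟩
    have key : ∀ s : Finset (Fin (n + 1)), ∃ a' : Fin (n + 1) → ℕ, Schedulable a' ∧
        (∀ i, a' i ≤ a i) ∧ ∀ i ∈ s, a' i ≤ 2 ^ n := by
      intro s
      induction s using Finset.induction_on with
      | empty => exact ⟨a, ha, fun _ => le_rfl, by simp⟩
      | insert i s _ ih =>
        obtain ⟨b, hb, hba, hbs⟩ := ih
        by_cases hi : b i ≤ 2 ^ n
        · refine ⟨b, hb, hba, fun j hj => ?_⟩
          rcases Finset.mem_insert.1 hj with rfl | hj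
          · exact hi
          · exact hbs j hj
        · obtain ⟨S, hS, hg⟩ := split_task b i hb
          obtain ⟨S', hS', hg'⟩ := hA n _ ⟨S, b i, (Nat.zero_le _).trans_lt (not_le.1 hi), hS, hg⟩
          refine ⟨Function.update b i (2 ^ n), merge_task _ i S' ?_ ?_, ?_, ?_⟩
          · simpa using hS'
          · simpa using hg'
          · intro j
            have := hba j
            by_cases hj : j = i
            · subst hj
              simp only [Function.update_self]
              omega
            · simpa [hj] using this
          · intro j hj
            by_cases hji : j = i
            · subst hji
              simp
            · simpa [hji] using hbs j (Finset.mem_of_mem_insert_of_ne hj hji)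
    obtain ⟨a', h1, h2, h3⟩ := key Finset.univ
    exact ⟨a', h1, fun i => ⟨h2 i, h3 i (Finset.mem_univ i)⟩⟩
  · rintro hB k a ⟨S, g, -, hS, hg⟩
    have hs : Schedulable (Fin.insertNth (α := fun _ => ℕ) 0 g a) :=
      merge_task _ 0 S (by simpa using hS) (by simpa using hg)
    obtain ⟨a', ha', hle⟩ := hB (k + 1) (by omega) _ hs
    obtain ⟨T, hT, hTg⟩ := split_task a' 0 ha'
    refine ⟨T, fun j t => ?_, hTg.mono_gap (hle 0).2⟩
    obtain ⟨t', h1, h2, h3⟩ := hT j t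
    have h4 : a' (Fin.succAbove 0 j) ≤ a j := by
      simpa using (hle (Fin.succAbove 0 j)).1
    exact ⟨t', h1, by dsimp only at h2; omega, h3⟩
end

section
/- Let a be a Pinwheel Scheduling instance with ℓ tasks that admits a valid schedule with gap frequency g, and let c ≥ 1. Then the instance with ℓ + c tasks whose frequencies are a 0, …, a (ℓ-1) together with c additional tasks each of frequency c · g is schedulable. -/
/-- Each holiday index between the counts at `t` and `t + n` is attained in that window. -/
theorem exists_count_eq (p : ℕ → Prop) [DecidablePred p] (t m n : ℕ)
    (h1 : Nat.count p t ≤ m) (h2 : m < Nat.count p (t + n)) :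
    ∃ t', t ≤ t' ∧ t' < t + n ∧ p t' ∧ Nat.count p t' = m := by
  induction n with
  | zero => simp at h2; omega
  | succ n ih =>
    by_cases h : m < Nat.count p (t + n)
    · obtain ⟨t', h3, h4, h5⟩ := ih h
      exact ⟨t', h3, by omega, h5⟩
    · rw [← add_assoc, Nat.count_succ] at h2
      split_ifs at h2 with hp
      · exact ⟨t + n, by omega, by omega, hp, by omega⟩
      · omega

theorem count_add_mul_le (p : ℕ → Prop) [DecidablePred p] (g : ℕ)
    (hg : ∀ t, ∃ t', t ≤ t' ∧ t' < t + g ∧ p t') (t n : ℕ) :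
    Nat.count p t + n ≤ Nat.count p (t + n * g) := by
  induction n with
  | zero => simp
  | succ n ih =>
    obtain ⟨t', h1, h2, h3⟩ := hg (t + n * g)
    have e1 := Nat.count_monotone p h1
    have e2 : Nat.count p (t' + 1) = Nat.count p t' + 1 := by simp [Nat.count_succ, h3]
    have e3 : Nat.count p (t' + 1) ≤ Nat.count p (t + (n + 1) * g) :=
      Nat.count_monotone p (by rw [Nat.add_mul]; omega)
    omega

theorem exists_mod_eq (c N j : ℕ) (hj : j < c) : ∃ m, N ≤ m ∧ m < N + c ∧ m % c = j := by
  have hd := Nat.div_add_mod N c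
  have hl := Nat.mod_lt N (show c > 0 by omega)
  by_cases h : N % c ≤ j
  · refine ⟨c * (N / c) + j, by omega, by omega, ?_⟩
    rw [Nat.mul_add_mod, Nat.mod_eq_of_lt hj]
  · refine ⟨c * (N / c + 1) + j, ?_, ?_, ?_⟩
    · rw [Nat.mul_add]; omega
    · rw [Nat.mul_add]; omega
    · rw [Nat.mul_add_mod, Nat.mod_eq_of_lt hj]

theorem round_robin_fill {ℓ c g : ℕ} (a : Fin ℓ → ℕ) (hc : 1 ≤ c)
    (h : ∃ S : ℕ → Option (Fin ℓ), IsValidSchedule a S ∧ HasGapFrequency S g) :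
    Schedulable (Fin.addCases a (fun _ : Fin c => c * g) : Fin (ℓ + c) → ℕ) := by
  classical
  obtain ⟨S, hS, hG⟩ := h
  let p : ℕ → Prop := fun t => S t = none
  refine ⟨fun t => match S t with
    | some i => some (Fin.castAdd c i)
    | none => some (Fin.natAdd ℓ ⟨Nat.count p t % c, Nat.mod_lt _ hc⟩), ?_⟩
  intro i t
  induction i using Fin.addCases with
  | left i =>
    obtain ⟨t', h1, h2, h3⟩ := hS i t
    refine ⟨t', h1, by simpa using h2, ?_⟩
    simp [h3]
  | right j =>
    obtain ⟨m, m1, m2, m3⟩ := exists_mod_eq c (Nat.count p t) j j.2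
    obtain ⟨t', h1, h2, h3, h4⟩ := exists_count_eq p t m (c * g) m1
      (lt_of_lt_of_le m2 (count_add_mul_le p g hG t c))
    refine ⟨t', h1, by simpa using h2, ?_⟩
    have h3' : S t' = none := h3
    simp only [h3', h4, m3]
end

section
/- Let b be a schedulable Pinwheel Scheduling instance with k ≥ 2 tasks and let i be a task. Then the instance with k - 1 tasks obtained from b by deleting task i admits a valid schedule with gap frequency b i. -/
/-- Deleting a task from a schedulable instance with at least two tasks yields an
instance that is loosely schedulable, with gap frequency the deleted frequency. -/
theorem delete_task_loosely_schedulable {n : ℕ} (hn : 1 ≤ n)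
    (b : Fin (n + 1) → ℕ) (hb : Schedulable b) (i : Fin (n + 1)) :
    ∃ S : ℕ → Option (Fin n),
      IsValidSchedule (b ∘ i.succAbove) S ∧ HasGapFrequency S (b i) := by
  obtain ⟨S, hS⟩ := hb
  refine ⟨fun t => (S t).bind (finSuccEquiv' i), ?_, ?_⟩
  · intro j t
    obtain ⟨t', h1, h2, h3⟩ := hS (i.succAbove j) t
    exact ⟨t', h1, h2, by simp [h3]⟩
  · intro t
    obtain ⟨t', h1, h2, h3⟩ := hS i t
    exact ⟨t', h1, h2, by simp [h3]⟩
end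

section
/- Let a be a schedulable Pinwheel Scheduling instance with k tasks, let i be a task, and let c ≥ 1. Then the c-wise unfolding of a at task i — the instance with k + c - 1 tasks whose frequencies are a j for all j ≠ i together with c tasks each of frequency c · (a i) — is schedulable. -/
theorem count_ivt (p : ℕ → Prop) [DecidablePred p] (t v d : ℕ)
    (h1 : Nat.count p t ≤ v) (h2 : v < Nat.count p (t + d)) :
    ∃ t', t ≤ t' ∧ t' < t + d ∧ p t' ∧ Nat.count p t' = v := by
  induction d with
  | zero => simp at h2; omega
  | succ d ih =>
    by_cases h : v < Nat.count p (t + d)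
    · obtain ⟨t', h3, h4, h5⟩ := ih h
      exact ⟨t', h3, by omega, h5⟩
    · rw [← Nat.add_assoc, Nat.count_succ] at h2
      split_ifs at h2 with hp
      · exact ⟨t + d, by omega, by omega, hp, by omega⟩
      · omega

theorem count_growth (p : ℕ → Prop) [DecidablePred p] (b : ℕ)
    (h : ∀ t, ∃ t', t ≤ t' ∧ t' < t + b ∧ p t') (t m : ℕ) :
    Nat.count p t + m ≤ Nat.count p (t + m * b) := by
  induction m with
  | zero => simp
  | succ m ih =>
    obtain ⟨t', h1, h2, h3⟩ := h (t + m * b)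
    have e1 := Nat.count_monotone p h1
    have e2 : Nat.count p (t' + 1) ≤ Nat.count p (t + (m + 1) * b) :=
      Nat.count_monotone p (by rw [Nat.add_mul]; omega)
    rw [Nat.count_succ, if_pos h3] at e2
    omega

/-- Unfolding a schedulable instance at task `i` into `c` copies of frequency
`c * a i` preserves schedulability. -/
theorem unfolding_schedulable {n c : ℕ} (hc : 1 ≤ c)
    (a : Fin (n + 1) → ℕ) (ha : Schedulable a) (i : Fin (n + 1)) :
    Schedulable
      (Fin.addCases (fun j : Fin n => a (i.succAbove j)) (fun _ : Fin c => c * a i) :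
        Fin (n + c) → ℕ) := by
  obtain ⟨S, hS⟩ := ha
  let r : ℕ → Fin c := fun t =>
    ⟨Nat.count (fun s => S s = some i) t % c, Nat.mod_lt _ hc⟩
  refine ⟨fun t => (S t).map
    (i.insertNth (α := fun _ => Fin (n + c)) (Fin.natAdd n (r t)) (Fin.castAdd c)), ?_⟩
  intro x t
  induction x using Fin.addCases with
  | left j =>
    obtain ⟨t', h1, h2, h3⟩ := hS (i.succAbove j) t
    exact ⟨t', h1, by simpa using h2, by simp [h3]⟩
  | right j =>
    have hg := count_growth (fun s => S s = some i) (a i) (hS i) t c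
    obtain ⟨v, hv1, hv2, hv3⟩ : ∃ v, Nat.count (fun s => S s = some i) t ≤ v ∧
        v < Nat.count (fun s => S s = some i) t + c ∧ v % c = j := by
      generalize Nat.count (fun s => S s = some i) t = q
      have hq := Nat.div_add_mod q c
      have hl := Nat.mod_lt q hc
      have hj := j.2
      by_cases hle : q % c ≤ j
      · exact ⟨j + c * (q / c), by omega, by omega, by
          rw [Nat.add_mul_mod_self_left, Nat.mod_eq_of_lt hj]⟩
      · exact ⟨j + c * (q / c + 1), by rw [Nat.mul_add]; omega,
          by rw [Nat.mul_add]; omega, by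
          rw [Nat.add_mul_mod_self_left, Nat.mod_eq_of_lt hj]⟩
    obtain ⟨t', h1, h2, h3, h4⟩ := count_ivt _ t v (c * a i) hv1 (by omega)
    have hr : r t' = j := Fin.ext (by simp only [r]; rw [h4, hv3])
    exact ⟨t', h1, by simpa using h2, by simp [h3, hr]⟩
end

section
/- Let a be a Pinwheel Scheduling instance with k tasks, let T be a set of c ≥ 1 tasks, and let f = ⌊(min over i ∈ T of a i) / c⌋. If the folded instance with k - c + 1 tasks, whose frequencies are a j for all j ∉ T together with one task of frequency f, is schedulable, then a is schedulable. -/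
lemma count_hit (p : ℕ → Prop) [DecidablePred p] (t n : ℕ) (d : ℕ) (h1 : Nat.count p t ≤ n)
    (h2 : n < Nat.count p (t + d)) : ∃ t', t ≤ t' ∧ t' < t + d ∧ p t' ∧ Nat.count p t' = n := by
  induction d with
  | zero => simp at h2; omega
  | succ d ih =>
    by_cases h : n < Nat.count p (t + d)
    · obtain ⟨t', a, b, c⟩ := ih h
      exact ⟨t', a, by omega, c⟩
    · rw [← Nat.add_assoc, Nat.count_succ] at h2
      by_cases hp : p (t + d)
      · rw [if_pos hp] at h2
        exact ⟨t + d, by omega, by omega, hp, by omega⟩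
      · rw [if_neg hp] at h2
        omega

lemma count_grow (p : ℕ → Prop) [DecidablePred p] (f : ℕ)
    (h : ∀ t, ∃ t', t ≤ t' ∧ t' < t + f ∧ p t') (m t : ℕ) :
    Nat.count p t + m ≤ Nat.count p (t + m * f) := by
  induction m with
  | zero => simp
  | succ m ih =>
    obtain ⟨t', h1, h2, h3⟩ := h (t + m * f)
    have e1 := Nat.count_monotone p h1
    have e2 : Nat.count p (t' + 1) = Nat.count p t' + 1 := by
      rw [Nat.count_succ, if_pos h3]
    have e3 : Nat.count p (t' + 1) ≤ Nat.count p (t + (m + 1) * f) :=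
      Nat.count_monotone p (by rw [Nat.add_mul]; omega)
    omega

lemma exists_residue (c N r : ℕ) (hr : r < c) : ∃ n, N ≤ n ∧ n < N + c ∧ n % c = r := by
  have h1 := Nat.div_add_mod N c
  have h2 := Nat.mod_lt N (show 0 < c by omega)
  by_cases h : N % c ≤ r
  · refine ⟨r + c * (N / c), by omega, by omega, ?_⟩
    rw [Nat.add_mul_mod_self_left, Nat.mod_eq_of_lt hr]
  · refine ⟨r + c * (N / c + 1), by rw [Nat.mul_add]; omega, by rw [Nat.mul_add]; omega, ?_⟩
    rw [Nat.add_mul_mod_self_left, Nat.mod_eq_of_lt hr]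

/-- Folding: if the instance obtained from `a` by replacing the `c` tasks of `T` with a
single task of frequency `⌊(min over T of a) / c⌋` is schedulable, so is `a`. -/
theorem folding_schedulable {k c : ℕ} (a : Fin k → ℕ) (T : Finset (Fin k))
    (hc : 1 ≤ c) (hT : T.card = c)
    (f : ℕ) (hf : f = T.inf' (Finset.card_pos.mp (by omega)) a / c)
    (b : Fin (k - c + 1) → ℕ)
    (e : Fin (k - c + 1) ≃ Option {j : Fin k // j ∉ T})
    (hb : ∀ i, b i = (e i).elim f (fun j => a j.1))
    (hsched : Schedulable b) :
    Schedulable a := by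
  classical
  subst hT
  obtain ⟨S, hS⟩ := hsched
  let p : ℕ → Prop := fun t => S t = some (e.symm none)
  let g : ℕ → Fin k := fun n => (T.equivFin.symm ⟨n % T.card, Nat.mod_lt _ hc⟩).1
  refine ⟨fun t => (S t).map (fun x => (e x).elim (g (Nat.count p t)) (fun j => j.1)), ?_⟩
  intro i t
  by_cases hi : i ∈ T
  · have hp : ∀ t, ∃ t', t ≤ t' ∧ t' < t + f ∧ p t' := by
      intro t
      have := hS (e.symm none) t
      rwa [hb, Equiv.apply_symm_apply] at this
    obtain ⟨n, n1, n2, n3⟩ := exists_residue T.card (Nat.count p t) (T.equivFin ⟨i, hi⟩).1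
      (T.equivFin ⟨i, hi⟩).2
    have hg := count_grow p f hp T.card t
    obtain ⟨t', h1, h2, h3, h4⟩ := count_hit p t n (T.card * f) n1 (by omega)
    refine ⟨t', h1, ?_, ?_⟩
    · have ha : T.card * f ≤ a i := by
        rw [hf]
        exact (Nat.mul_div_le _ _).trans (Finset.inf'_le _ hi)
      omega
    · have h3' : S t' = some (e.symm none) := h3
      simp [h3', h4, g, n3]
  · obtain ⟨t', h1, h2, h3⟩ := hS (e.symm (some ⟨i, hi⟩)) t
    rw [hb, Equiv.apply_symm_apply] at h2
    exact ⟨t', h1, h2, by simp [h3]⟩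
end

section
/- Let a : Fin 4 → ℕ be a Pinwheel Scheduling instance with a 0 ≤ a 1 ≤ a 2 ≤ a 3. Then a is schedulable if and only if a dominates componentwise (is ≥ in every component) one of the six instances (2,4,8,8), (2,6,6,6), (3,3,6,6), (3,4,5,8), (3,5,5,5), (4,4,4,4). -/
/-- Can three tasks with frequencies `a b c` survive `n` more days with remaining deadlines
`x y z`, when other things are done on free days and the day with `h + 1` days left is blocked? -/
def srchThree (a b c h : ℕ) : ℕ → ℕ → ℕ → ℕ → Bool
  | 0, _, _, _ => true
  | n + 1, x, y, z =>
    if x = 0 ∨ y = 0 ∨ z = 0 then false else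
      srchThree a b c h n (x - 1) (y - 1) (z - 1) ||
      (if n = h then false else
        (srchThree a b c h n a (y - 1) (z - 1) ||
         srchThree a b c h n (x - 1) b (z - 1) ||
         srchThree a b c h n (x - 1) (y - 1) c))

/-- Can four tasks with frequencies `a b c d` survive `n` more days with the given remaining
deadlines? -/
def srchFour (a b c d : ℕ) : ℕ → ℕ → ℕ → ℕ → ℕ → Bool
  | 0, _, _, _, _ => true
  | n + 1, x, y, z, w =>
    if x = 0 ∨ y = 0 ∨ z = 0 ∨ w = 0 then false else
      srchFour a b c d n a (y - 1) (z - 1) (w - 1) ||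
      srchFour a b c d n (x - 1) b (z - 1) (w - 1) ||
      srchFour a b c d n (x - 1) (y - 1) c (w - 1) ||
      srchFour a b c d n (x - 1) (y - 1) (z - 1) d

/-- Task `i` is done on one of the days `t, …, t + c - 1`. -/
def Occ (S : ℕ → Fin 4) (i : Fin 4) (t c : ℕ) : Prop :=
  ∃ t', t ≤ t' ∧ t' < t + c ∧ S t' = i

lemma Occ.ne_zero {S : ℕ → Fin 4} {i : Fin 4} {t c : ℕ} (h : Occ S i t c) : c ≠ 0 := by
  obtain ⟨s, h1, h2, -⟩ := h
  omega

lemma Occ.step {S : ℕ → Fin 4} {i : Fin 4} {t c : ℕ} (h : Occ S i t c) (hi : S t ≠ i) :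
    Occ S i (t + 1) (c - 1) := by
  obtain ⟨s, h1, h2, h3⟩ := h
  have : s ≠ t := by
    rintro rfl
    exact hi h3
  exact ⟨s, by omega, by omega, h3⟩

lemma Occ.mono {S : ℕ → Fin 4} {i : Fin 4} {t c c' : ℕ} (h : Occ S i t c) (hc : c ≤ c') :
    Occ S i t c' := by
  obtain ⟨s, h1, h2, h3⟩ := h
  exact ⟨s, h1, by omega, h3⟩

lemma srchThree_true {S : ℕ → Fin 4} {a b c h : ℕ}
    (ha : ∀ t, Occ S 0 t a) (hb : ∀ t, Occ S 1 t b) (hc : ∀ t, Occ S 2 t c) :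
    ∀ (n t x y z : ℕ), Occ S 0 t x → Occ S 1 t y → Occ S 2 t z →
      (h < n → S (t + n - 1 - h) = 3) → srchThree a b c h n x y z = true := by
  intro n
  induction n with
  | zero => intros; rfl
  | succ n ih =>
    intro t x y z hx hy hz hT
    have hT' : h < n → S (t + 1 + n - 1 - h) = 3 := by
      intro hn
      have := hT (by omega)
      rwa [show t + (n + 1) - 1 - h = t + 1 + n - 1 - h by omega] at this
    have hb3 : n = h → S t = 3 := by
      rintro rfl
      have := hT (by omega)
      rwa [show t + (n + 1) - 1 - n = t by omega] at this
    have nx := hx.ne_zero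
    have ny := hy.ne_zero
    have nz := hz.ne_zero
    rw [srchThree, if_neg (by tauto)]
    have key : ∀ v : Fin 4, v = 0 ∨ v = 1 ∨ v = 2 ∨ v = 3 := by decide
    rcases key (S t) with h0 | h0 | h0 | h0
    · have hn : n ≠ h := fun e => by simp [hb3 e] at h0
      have := ih (t + 1) _ _ _ (ha _) (hy.step (by simp [h0])) (hz.step (by simp [h0])) hT'
      simp [hn, this]
    · have hn : n ≠ h := fun e => by simp [hb3 e] at h0
      have := ih (t + 1) _ _ _ (hx.step (by simp [h0])) (hb _) (hz.step (by simp [h0])) hT'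
      simp [hn, this]
    · have hn : n ≠ h := fun e => by simp [hb3 e] at h0
      have := ih (t + 1) _ _ _ (hx.step (by simp [h0])) (hy.step (by simp [h0])) (hc _) hT'
      simp [hn, this]
    · have := ih (t + 1) _ _ _ (hx.step (by simp [h0])) (hy.step (by simp [h0]))
        (hz.step (by simp [h0])) hT'
      simp [this]

lemma srchFour_true {S : ℕ → Fin 4} {a b c d : ℕ}
    (ha : ∀ t, Occ S 0 t a) (hb : ∀ t, Occ S 1 t b) (hc : ∀ t, Occ S 2 t c)
    (hd : ∀ t, Occ S 3 t d) :
    ∀ (n t x y z w : ℕ), Occ S 0 t x → Occ S 1 t y → Occ S 2 t z → Occ S 3 t w →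
      srchFour a b c d n x y z w = true := by
  intro n
  induction n with
  | zero => intros; rfl
  | succ n ih =>
    intro t x y z w hx hy hz hw
    have nx := hx.ne_zero
    have ny := hy.ne_zero
    have nz := hz.ne_zero
    have nw := hw.ne_zero
    rw [srchFour, if_neg (by tauto)]
    have key : ∀ v : Fin 4, v = 0 ∨ v = 1 ∨ v = 2 ∨ v = 3 := by decide
    rcases key (S t) with h0 | h0 | h0 | h0
    · have := ih (t + 1) _ _ _ _ (ha _) (hy.step (by simp [h0])) (hz.step (by simp [h0]))
        (hw.step (by simp [h0]))
      simp [this]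
    · have := ih (t + 1) _ _ _ _ (hx.step (by simp [h0])) (hb _) (hz.step (by simp [h0]))
        (hw.step (by simp [h0]))
      simp [this]
    · have := ih (t + 1) _ _ _ _ (hx.step (by simp [h0])) (hy.step (by simp [h0])) (hc _)
        (hw.step (by simp [h0]))
      simp [this]
    · have := ih (t + 1) _ _ _ _ (hx.step (by simp [h0])) (hy.step (by simp [h0]))
        (hz.step (by simp [h0])) (hd _)
      simp [this]

/-- Three tasks that leave no free day in the middle of a window cannot be extended. -/
lemma no_three {S : ℕ → Fin 4} {a b c d h : ℕ}
    (ha : ∀ t, Occ S 0 t a) (hb : ∀ t, Occ S 1 t b) (hc : ∀ t, Occ S 2 t c)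
    (hd : ∀ t, Occ S 3 t d) (hs : srchThree a b c h (2 * h + 1) a b c = false) : False := by
  obtain ⟨T, h1, -, h3⟩ := hd h
  have := srchThree_true (h := h) ha hb hc (2 * h + 1) (T - h) a b c (ha _) (hb _) (hc _)
    (fun _ => by rw [show T - h + (2 * h + 1) - 1 - h = T by omega]; exact h3)
  simp [hs] at this

/-- A cyclic word gives a schedule. -/
lemma schedulable_of_cyclic {a b : Fin 4 → ℕ} (hab : ∀ i, b i ≤ a i) (p : ℕ) (hp : 0 < p)
    (f : ℕ → Fin 4)
    (hf : ∀ i, ∀ r < p, ∃ d < b i, f ((r + d) % p) = i) : Schedulable a := by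
  refine ⟨fun t => some (f (t % p)), fun i t => ?_⟩
  obtain ⟨d, hd, h⟩ := hf i (t % p) (Nat.mod_lt _ hp)
  refine ⟨t + d, by omega, by have := hab i; omega, ?_⟩
  simp only [Nat.mod_add_mod] at h
  simp [h]

theorem pareto_surface_four_tasks (a : Fin 4 → ℕ)
    (hsorted : a 0 ≤ a 1 ∧ a 1 ≤ a 2 ∧ a 2 ≤ a 3) :
    Schedulable a ↔
      ((∀ i, ![2, 4, 8, 8] i ≤ a i) ∨
       (∀ i, ![2, 6, 6, 6] i ≤ a i) ∨
       (∀ i, ![3, 3, 6, 6] i ≤ a i) ∨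
       (∀ i, ![3, 4, 5, 8] i ≤ a i) ∨
       (∀ i, ![3, 5, 5, 5] i ≤ a i) ∨
       (∀ i, ![4, 4, 4, 4] i ≤ a i)) := by
  constructor
  · rintro ⟨S₀, hS₀⟩
    let S : ℕ → Fin 4 := fun t => (S₀ t).getD 0
    have hS : ∀ i t, Occ S i t (a i) := by
      intro i t
      obtain ⟨s, h1, h2, h3⟩ := hS₀ i t
      exact ⟨s, h1, h2, by simp [S, h3]⟩
    have up : ∀ i m, a i ≤ m → ∀ t, Occ S i t m := fun i m h t => (hS i t).mono h
    by_contra hcon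
    simp only [Fin.forall_fin_succ, Fin.isValue, Matrix.cons_val_zero, Matrix.cons_val_succ,
      Fin.succ_zero_eq_one, Fin.succ_one_eq_two, IsEmpty.forall_iff, and_true] at hcon
    rw [show (Fin.succ 2 : Fin 4) = 3 from rfl] at hcon
    have cases6 : a 0 ≤ 1 ∨ (a 0 ≤ 2 ∧ a 1 ≤ 3) ∨ (a 0 ≤ 2 ∧ a 1 ≤ 5 ∧ a 2 ≤ 7) ∨
        (a 0 ≤ 3 ∧ a 1 ≤ 3 ∧ a 2 ≤ 5) ∨ (a 0 ≤ 3 ∧ a 1 ≤ 4 ∧ a 2 ≤ 4) ∨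
        (a 0 ≤ 3 ∧ a 1 ≤ 4 ∧ a 2 ≤ 5 ∧ a 3 ≤ 7) := by omega
    rcases cases6 with h | ⟨h0, h1⟩ | ⟨h0, h1, h2⟩ | ⟨h0, h1, h2⟩ | ⟨h0, h1, h2⟩ |
      ⟨h0, h1, h2, h3⟩
    · obtain ⟨T, -, -, hT⟩ := hS 1 0
      obtain ⟨s, s1, s2, s3⟩ := up 0 1 h T
      rw [show s = T by omega, hT] at s3
      simp at s3
    · obtain ⟨T, hT1, -, hT⟩ := hS 2 1
      obtain ⟨s, s1, s2, s3⟩ := up 0 2 h0 (T - 1)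
      obtain ⟨r, r1, r2, r3⟩ := up 0 2 h0 T
      obtain ⟨q, q1, q2, q3⟩ := up 1 3 h1 (T - 1)
      have e1 : s ≠ T := by rintro rfl; simp [hT] at s3
      have e2 : r ≠ T := by rintro rfl; simp [hT] at r3
      have e3 : q ≠ T := by rintro rfl; simp [hT] at q3
      have e4 : q ≠ s := by rintro rfl; simp [s3] at q3
      have e5 : q ≠ r := by rintro rfl; simp [r3] at q3
      omega
    · exact no_three (h := 5) (up 0 2 h0) (up 1 5 h1) (up 2 7 h2) (hS 3) (by decide +kernel)
    · exact no_three (h := 5) (up 0 3 h0) (up 1 3 h1) (up 2 5 h2) (hS 3) (by decide +kernel)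
    · exact no_three (h := 5) (up 0 3 h0) (up 1 4 h1) (up 2 4 h2) (hS 3) (by decide +kernel)
    · have := srchFour_true (up 0 3 h0) (up 1 4 h1) (up 2 5 h2) (up 3 7 h3) 22 0 3 4 5 7
        (up 0 3 h0 _) (up 1 4 h1 _) (up 2 5 h2 _) (up 3 7 h3 _)
      have hs : srchFour 3 4 5 7 22 3 4 5 7 = false := by decide +kernel
      simp [hs] at this
  · rintro (h | h | h | h | h | h)
    · exact schedulable_of_cyclic h 8 (by norm_num)
        (fun t => [0, 1, 0, 2, 0, 1, 0, 3].getD t 0) (by decide +kernel)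
    · exact schedulable_of_cyclic h 6 (by norm_num)
        (fun t => [0, 1, 0, 2, 0, 3].getD t 0) (by decide +kernel)
    · exact schedulable_of_cyclic h 6 (by norm_num)
        (fun t => [0, 1, 2, 0, 1, 3].getD t 0) (by decide +kernel)
    · exact schedulable_of_cyclic h 8 (by norm_num)
        (fun t => [0, 3, 1, 0, 2, 0, 1, 2].getD t 0) (by decide +kernel)
    · exact schedulable_of_cyclic h 5 (by norm_num)
        (fun t => [3, 0, 1, 0, 2].getD t 0) (by decide +kernel)
    · exact schedulable_of_cyclic h 4 (by norm_num)
        (fun t => [0, 1, 2, 3].getD t 0) (by decide +kernel)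
end
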